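/- arXiv:2407.13762 — 2 statements merged into one kernel-verified Lean document; each statement's English description precedes it below -/
import Mathlib

section
/- Fix a > 0, κ ≥ 0 and t > 0. For every continuous θ : [0,t] → 𝒳ₙ the following hold: (i) Φ^{κ,a}_t(θ) = a·log( F(θ_t)/F(θ_0) ) + a·κ·n(n²−1)·t/24 + (2(κ−a)/a)·∫₀ᵗ Σ_{j=1}ⁿ φ_a^j(θ_s)² ds; (ii) Φ^{0,a}_t(θ) ≤ G_a(θ_0); (iii) Φ^{κ,a}_t(θ) = Φ^{0,a}_t(θ) + (κ/2)∫₀ᵗ ψ_a(θ_s) ds, which decreases monotonically to Φ^{0,a}_t(θ) as κ ↓ 0. -/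
open MeasureTheory Filter Set
open scoped Real Topology ENNReal Classical

noncomputable section

/-- The configuration space `𝒳ₙ` of `n` ordered points on (a lift of) the circle:
`θ¹ < θ² < ⋯ < θⁿ < θ¹ + 2π`. -/
def Xspace (n : ℕ) : Set (Fin n → ℝ) :=
  {x | StrictMono x ∧ ∀ i j : Fin n, x i < x j + 2 * π}

/-- The value `θ^{j+1}`, with the convention `θ^{n+1} = θ¹ + 2π`. -/
def nextVal {n : ℕ} (x : Fin n → ℝ) (j : Fin n) : ℝ :=
  if h : (j : ℕ) + 1 < n then x ⟨(j : ℕ) + 1, h⟩ else x ⟨0, j.pos⟩ + 2 * π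

/-- The gap `θ^{j+1} - θ^j` (with wrap-around convention). -/
def gap {n : ℕ} (x : Fin n → ℝ) (j : Fin n) : ℝ := nextVal x j - x j

/-- The minimal gap `Δ(θ) = min_j (θ^{j+1} - θ^j)`. -/
def minGap {n : ℕ} (x : Fin n → ℝ) : ℝ := ⨅ j : Fin n, gap x j

/-- `d(θ) := max_j |2π/n - (θ^{j+1} - θ^j)|`. -/
def dGap {n : ℕ} (x : Fin n → ℝ) : ℝ := ⨆ j : Fin n, |2 * π / n - gap x j|

/-- `φ^j(θ) = ∑_{k ≠ j} cot((θ^j - θ^k)/2)`. -/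
def phi {n : ℕ} (x : Fin n → ℝ) (j : Fin n) : ℝ :=
  ∑ k ∈ Finset.univ.erase j, Real.cot ((x j - x k) / 2)

/-- `φ_a^j := (a/4) φ^j`. -/
def phiA {n : ℕ} (a : ℝ) (x : Fin n → ℝ) (j : Fin n) : ℝ := a / 4 * phi x j

/-- Absolute continuity of every coordinate of `θ` on `[0, T]`: each component is the
integral of a (locally) integrable function. -/
def AbsCont {n : ℕ} (T : ℝ) (θ : ℝ → Fin n → ℝ) : Prop :=
  ∃ v : ℝ → Fin n → ℝ, (∀ j, IntegrableOn (fun s => v s j) (Icc 0 T)) ∧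
    ∀ t ∈ Icc (0 : ℝ) T, ∀ j, θ t j = θ 0 j + ∫ s in (0 : ℝ)..t, v s j

/-- Truncated multiradial Dirichlet energy `J_T(θ)`. -/
def mEnergy (n : ℕ) (T : ℝ) (θ : ℝ → Fin n → ℝ) : ℝ≥0∞ :=
  if AbsCont T θ then
    ENNReal.ofReal (1 / 2) *
      ∫⁻ s in Ioc (0 : ℝ) T,
        ENNReal.ofReal (∑ j, (deriv (fun t => θ t j) s - 2 * phi (θ s) j) ^ 2)
  else ⊤

/-- Multiradial Dirichlet energy `J(θ) = lim_{T→∞} J_T(θ)`, the supremum of the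
nondecreasing family `J_T(θ)`. -/
def mEnergyInf (n : ℕ) (θ : ℝ → Fin n → ℝ) : ℝ≥0∞ := ⨆ T : ℝ, mEnergy n T θ

/-- Truncated multiradial Dirichlet energy with parameter `a`, `J^a_T(θ)`. -/
def mEnergyA (n : ℕ) (a T : ℝ) (θ : ℝ → Fin n → ℝ) : ℝ≥0∞ :=
  if AbsCont T θ then
    ENNReal.ofReal (1 / 2) *
      ∫⁻ s in Ioc (0 : ℝ) T,
        ENNReal.ofReal (∑ j, (deriv (fun t => θ t j) s - 2 * phiA a (θ s) j) ^ 2)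
  else ⊤

/-- `J^a(θ) = lim_{T→∞} J^a_T(θ)` (supremum of the nondecreasing family). -/
def mEnergyAInf (n : ℕ) (a : ℝ) (θ : ℝ → Fin n → ℝ) : ℝ≥0∞ := ⨆ T : ℝ, mEnergyA n a T θ

/-- Truncated Dirichlet energy `E_T(θ)`. -/
def dEnergy (n : ℕ) (T : ℝ) (θ : ℝ → Fin n → ℝ) : ℝ≥0∞ :=
  if AbsCont T θ then
    ENNReal.ofReal (1 / 2) *
      ∫⁻ s in Ioc (0 : ℝ) T, ENNReal.ofReal (∑ j, deriv (fun t => θ t j) s ^ 2)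
  else ⊤

/-- `E(θ) = lim_{T→∞} E_T(θ)` (supremum of the nondecreasing family). -/
def dEnergyInf (n : ℕ) (θ : ℝ → Fin n → ℝ) : ℝ≥0∞ := ⨆ T : ℝ, dEnergy n T θ

/-- `F(θ) := ∏_{j<k} |sin((θ^k - θ^j)/2)|`. -/
def Fprod {n : ℕ} (x : Fin n → ℝ) : ℝ :=
  ∏ j : Fin n, ∏ k ∈ Finset.univ.filter (fun k => j < k), |Real.sin ((x k - x j) / 2)|

/-- `G_a(θ) := -a log F(θ)`. -/
def Ga {n : ℕ} (a : ℝ) (x : Fin n → ℝ) : ℝ := -(a * Real.log (Fprod x))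

/-- `ψ(θ) := ∑_j ∑_{k≠j} csc²((θ^j - θ^k)/2)`. -/
def psi {n : ℕ} (x : Fin n → ℝ) : ℝ :=
  ∑ j : Fin n, ∑ k ∈ Finset.univ.erase j, (Real.sin ((x j - x k) / 2))⁻¹ ^ 2

/-- `ψ_a := (a/4) ψ`. -/
def psiA {n : ℕ} (a : ℝ) (x : Fin n → ℝ) : ℝ := a / 4 * psi x

/-- The radial interaction functional `Φ^{κ,a}_T(θ)`. -/
def PhiK {n : ℕ} (κ a T : ℝ) (θ : ℝ → Fin n → ℝ) : ℝ :=
  Ga a (θ 0) - Ga a (θ T) +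
    (1 / 2) * ∫ s in (0 : ℝ)..T, (κ * psiA a (θ s) - ∑ j, (2 * phiA a (θ s) j) ^ 2)

theorem phi_eq_sum_univ {n : ℕ} (x : Fin n → ℝ) (j : Fin n) :
    phi x j = ∑ k, Real.cot ((x j - x k) / 2) :=
  Finset.sum_erase _ (by simp [Real.cot_eq_cos_div_sin])

theorem psi_eq_sum_univ {n : ℕ} (x : Fin n → ℝ) :
    psi x = ∑ j, ∑ k, (Real.sin ((x j - x k) / 2))⁻¹ ^ 2 :=
  Finset.sum_congr rfl fun _ _ => Finset.sum_erase _ (by simp)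

theorem Xspace.sin_half_sub_ne_zero {n : ℕ} {x : Fin n → ℝ} (hx : x ∈ Xspace n)
    {j k : Fin n} (hjk : j ≠ k) : Real.sin ((x j - x k) / 2) ≠ 0 := by
  obtain ⟨hmono, hlt⟩ := hx
  have h₁ := hlt j k
  have h₂ := hlt k j
  rcases lt_or_gt_of_ne hjk with h | h
  · have := hmono h
    exact (Real.sin_neg_of_neg_of_neg_pi_lt (by linarith) (by linarith)).ne
  · have := hmono h
    exact (Real.sin_pos_of_pos_of_lt_pi (by linarith) (by linarith)).ne'

theorem Real.cot_neg_eq_neg_cot (u : ℝ) : Real.cot (-u) = -Real.cot u := by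
  simp [Real.cot_eq_cos_div_sin, div_neg]

theorem Real.cot_sq_eq_inv_sin_sq_sub_one {u : ℝ} (hu : Real.sin u ≠ 0) :
    Real.cot u ^ 2 = (Real.sin u)⁻¹ ^ 2 - 1 := by
  rw [Real.cot_eq_cos_div_sin]
  field_simp
  linarith [Real.sin_sq_add_cos_sq u]

/-- The cyclic product identity for cotangents of three angles `u - v`, `v - w`, `w - u`. -/
theorem Real.cot_sub_mul_cot_sub_cyclic {u v w : ℝ} (huv : Real.sin (u - v) ≠ 0)
    (hvw : Real.sin (v - w) ≠ 0) (hwu : Real.sin (w - u) ≠ 0) :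
    Real.cot (u - v) * Real.cot (v - w) + Real.cot (v - w) * Real.cot (w - u) +
      Real.cot (w - u) * Real.cot (u - v) = 1 := by
  have hw : w - u = -((u - v) + (v - w)) := by ring
  rw [hw] at hwu ⊢
  generalize u - v = p at *
  generalize v - w = q at *
  rw [Real.sin_neg, Real.sin_add, neg_ne_zero] at hwu
  simp only [Real.cot_eq_cos_div_sin, Real.sin_neg, Real.cos_neg, Real.sin_add, Real.cos_add]
  field_simp
  ring

theorem Xspace.cot_triple {n : ℕ} {x : Fin n → ℝ} (hx : x ∈ Xspace n) (j k l : Fin n) :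
    Real.cot ((x j - x k) / 2) * Real.cot ((x j - x l) / 2) +
      Real.cot ((x k - x l) / 2) * Real.cot ((x k - x j) / 2) +
      Real.cot ((x l - x j) / 2) * Real.cot ((x l - x k) / 2) =
    -1 + (if j = k then (Real.sin ((x j - x l) / 2))⁻¹ ^ 2 else 0) +
      (if k = l then (Real.sin ((x k - x j) / 2))⁻¹ ^ 2 else 0) +
      (if l = j then (Real.sin ((x l - x k) / 2))⁻¹ ^ 2 else 0) +
      (if j = k then if k = l then 1 else 0 else 0) := by
  have hzero : Real.cot 0 = 0 := by simp [Real.cot_eq_cos_div_sin]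
  have hsq : ∀ p q : Fin n, p ≠ q → Real.cot ((x p - x q) / 2) * Real.cot ((x p - x q) / 2) =
      (Real.sin ((x p - x q) / 2))⁻¹ ^ 2 - 1 := fun p q hpq => by
    rw [← sq, Real.cot_sq_eq_inv_sin_sq_sub_one (Xspace.sin_half_sub_ne_zero hx hpq)]
  have hsymm : ∀ p q : Fin n,
      Real.cot ((x p - x q) / 2) = -Real.cot ((x q - x p) / 2) := fun p q => by
    rw [← Real.cot_neg_eq_neg_cot]
    congr 1
    ring
  have hsin : ∀ p q : Fin n,
      (Real.sin ((x p - x q) / 2))⁻¹ ^ 2 = (Real.sin ((x q - x p) / 2))⁻¹ ^ 2 := fun p q => by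
    rw [show (x p - x q) / 2 = -((x q - x p) / 2) by ring, Real.sin_neg, inv_neg, neg_sq]
  by_cases hjk : j = k
  · subst hjk
    by_cases hjl : j = l
    · subst hjl
      simp [hzero]
    · have h := hsq l j (Ne.symm hjl)
      rw [if_pos rfl, if_neg hjl, if_neg (Ne.symm hjl), if_pos rfl, if_neg hjl, h, hsin j l]
      simp only [sub_self, zero_div, hzero]
      ring
  · by_cases hkl : k = l
    · subst hkl
      have h := hsq j k hjk
      rw [if_neg hjk, if_pos rfl, if_neg (Ne.symm hjk), if_neg hjk, h, hsin j k]
      simp only [sub_self, zero_div, hzero]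
      ring
    · by_cases hlj : l = j
      · subst hlj
        have h := hsq k l hkl
        rw [if_neg hjk, if_neg hkl, if_pos rfl, if_neg hjk, h, hsin k l]
        simp only [sub_self, zero_div, hzero]
        ring
      · have hdiv : ∀ p q : Fin n, (x p - x q) / 2 = x p / 2 - x q / 2 := fun p q => sub_div _ _ _
        have h := Real.cot_sub_mul_cot_sub_cyclic
          (hdiv j k ▸ Xspace.sin_half_sub_ne_zero hx hjk) (hdiv k l ▸ Xspace.sin_half_sub_ne_zero hx hkl)
          (hdiv l j ▸ Xspace.sin_half_sub_ne_zero hx hlj)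
        rw [← hdiv, ← hdiv, ← hdiv] at h
        rw [if_neg hjk, if_neg hkl, if_neg hlj, if_neg hjk, hsymm j l, hsymm k j, hsymm l k]
        linarith

/-- The pointwise identity `ψ = ∑ⱼ (φʲ)² + n(n² - 1)/3` on the configuration space. -/
theorem Xspace.psi_eq {n : ℕ} {x : Fin n → ℝ} (hx : x ∈ Xspace n) :
    psi x = ∑ j, phi x j ^ 2 + (n : ℝ) * ((n : ℝ) ^ 2 - 1) / 3 := by
  have hS : ∑ j, phi x j ^ 2 =
      ∑ j, ∑ k, ∑ l, Real.cot ((x j - x k) / 2) * Real.cot ((x j - x l) / 2) := by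
    simp only [phi_eq_sum_univ, sq, Finset.sum_mul_sum]
  have hS₂ : ∑ j, phi x j ^ 2 =
      ∑ j, ∑ k, ∑ l, Real.cot ((x k - x l) / 2) * Real.cot ((x k - x j) / 2) := by
    rw [hS]
    conv_rhs => rw [Finset.sum_comm]
    conv_rhs => enter [2, k]; rw [Finset.sum_comm]
  have hS₃ : ∑ j, phi x j ^ 2 =
      ∑ j, ∑ k, ∑ l, Real.cot ((x l - x j) / 2) * Real.cot ((x l - x k) / 2) := by
    rw [hS, Finset.sum_comm]
    conv_lhs => enter [2, k]; rw [Finset.sum_comm]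
  have htriple := Finset.sum_congr rfl fun j (_ : j ∈ Finset.univ) =>
    Finset.sum_congr rfl fun k (_ : k ∈ Finset.univ) =>
      Finset.sum_congr rfl fun l (_ : l ∈ Finset.univ) => Xspace.cot_triple hx j k l
  have hswap : ∑ j, ∑ k, (Real.sin ((x j - x k) / 2))⁻¹ ^ 2 =
      ∑ j, ∑ k, (Real.sin ((x k - x j) / 2))⁻¹ ^ 2 := Finset.sum_comm
  simp only [Finset.sum_add_distrib] at htriple
  rw [← hS, ← hS₂, ← hS₃] at htriple
  simp only [Finset.sum_neg_distrib, Finset.sum_const, Finset.card_univ, Fintype.card_fin,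
    nsmul_eq_mul, mul_one, Finset.sum_ite_irrel, mul_zero, Finset.sum_ite_eq,
    Finset.sum_ite_eq', Finset.mem_univ, if_true] at htriple
  rw [← hswap, ← psi_eq_sum_univ] at htriple
  linarith

theorem Xspace.continuousOn_phi {n : ℕ} (j : Fin n) :
    ContinuousOn (fun x : Fin n → ℝ => phi x j) (Xspace n) := by
  simp only [phi, Real.cot_eq_cos_div_sin]
  refine continuousOn_finsetSum _ fun k hk => ContinuousOn.div (by fun_prop) (by fun_prop) ?_
  exact fun x hx => Xspace.sin_half_sub_ne_zero hx (Finset.ne_of_mem_erase hk).symm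

theorem Xspace.continuousOn_psi {n : ℕ} :
    ContinuousOn (psi : (Fin n → ℝ) → ℝ) (Xspace n) := by
  refine continuousOn_finsetSum _ fun j _ => continuousOn_finsetSum _ fun k hk =>
    (ContinuousOn.inv₀ (by fun_prop) ?_).pow 2
  exact fun x hx => Xspace.sin_half_sub_ne_zero hx (Finset.ne_of_mem_erase hk).symm

theorem psiA_nonneg {n : ℕ} {a : ℝ} (ha : 0 ≤ a) (x : Fin n → ℝ) : 0 ≤ psiA a x :=
  mul_nonneg (by positivity)
    (Finset.sum_nonneg fun _ _ => Finset.sum_nonneg fun _ _ => sq_nonneg _)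

theorem Fprod_nonneg {n : ℕ} (x : Fin n → ℝ) : 0 ≤ Fprod x :=
  Finset.prod_nonneg fun _ _ => Finset.prod_nonneg fun _ _ => abs_nonneg _

theorem Fprod_le_one {n : ℕ} (x : Fin n → ℝ) : Fprod x ≤ 1 :=
  Finset.prod_le_one (fun _ _ => Finset.prod_nonneg fun _ _ => abs_nonneg _) fun _ _ =>
    Finset.prod_le_one (fun _ _ => abs_nonneg _) fun _ _ => Real.abs_sin_le_one _

theorem Xspace.Fprod_ne_zero {n : ℕ} {x : Fin n → ℝ} (hx : x ∈ Xspace n) : Fprod x ≠ 0 :=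
  Finset.prod_ne_zero_iff.mpr fun _ _ => Finset.prod_ne_zero_iff.mpr fun _ hk =>
    abs_ne_zero.mpr (Xspace.sin_half_sub_ne_zero hx (Finset.mem_filter.mp hk).2.ne')

theorem Ga_nonneg {n : ℕ} {a : ℝ} (ha : 0 ≤ a) (x : Fin n → ℝ) : 0 ≤ Ga a x :=
  neg_nonneg.mpr
    (mul_nonpos_of_nonneg_of_nonpos ha (Real.log_nonpos (Fprod_nonneg x) (Fprod_le_one x)))

/-- Linearity of `Φ^{κ,a}_t` in `κ`, with the two path integrals separated. -/
theorem PhiK_eq_of_continuousOn {n : ℕ} {t : ℝ} (κ a : ℝ) (ht : 0 ≤ t) {θ : ℝ → Fin n → ℝ}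
    (hcont : ContinuousOn θ (Icc 0 t)) (hX : ∀ s ∈ Icc (0 : ℝ) t, θ s ∈ Xspace n) :
    PhiK κ a t θ = Ga a (θ 0) - Ga a (θ t) + κ / 2 * (∫ s in (0 : ℝ)..t, psiA a (θ s)) -
      2 * ∫ s in (0 : ℝ)..t, ∑ j, phiA a (θ s) j ^ 2 := by
  have hpsi : IntervalIntegrable (fun s => κ * psiA a (θ s)) volume 0 t := by
    refine ContinuousOn.intervalIntegrable ?_
    rw [uIcc_of_le ht]
    exact ((Xspace.continuousOn_psi.comp hcont hX).const_mul _).const_mul _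
  have hphi : IntervalIntegrable (fun s => 4 * ∑ j, phiA a (θ s) j ^ 2) volume 0 t := by
    refine ContinuousOn.intervalIntegrable ?_
    rw [uIcc_of_le ht]
    exact (continuousOn_finsetSum _ fun j _ =>
      (((Xspace.continuousOn_phi j).comp hcont hX).const_mul _).pow 2).const_mul _
  have hsum : ∀ s, ∑ j, (2 * phiA a (θ s) j) ^ 2 = 4 * ∑ j, phiA a (θ s) j ^ 2 := fun s => by
    rw [Finset.mul_sum]
    exact Finset.sum_congr rfl fun j _ => by ring
  simp only [PhiK, hsum]
  rw [intervalIntegral.integral_sub hpsi hphi, intervalIntegral.integral_const_mul,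
    intervalIntegral.integral_const_mul]
  ring

theorem integral_psiA_eq {n : ℕ} {a t : ℝ} (ha : a ≠ 0) (ht : 0 ≤ t) {θ : ℝ → Fin n → ℝ}
    (hcont : ContinuousOn θ (Icc 0 t)) (hX : ∀ s ∈ Icc (0 : ℝ) t, θ s ∈ Xspace n) :
    ∫ s in (0 : ℝ)..t, psiA a (θ s) =
      4 / a * (∫ s in (0 : ℝ)..t, ∑ j, phiA a (θ s) j ^ 2) +
        a * ((n : ℝ) * ((n : ℝ) ^ 2 - 1)) * t / 12 := by
  have hphi : IntervalIntegrable (fun s => 4 / a * ∑ j, phiA a (θ s) j ^ 2) volume 0 t := by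
    refine ContinuousOn.intervalIntegrable ?_
    rw [uIcc_of_le ht]
    exact (continuousOn_finsetSum _ fun j _ =>
      (((Xspace.continuousOn_phi j).comp hcont hX).const_mul _).pow 2).const_mul _
  have hpt : EqOn (fun s => psiA a (θ s)) (fun s => 4 / a * ∑ j, phiA a (θ s) j ^ 2 +
      a * ((n : ℝ) * ((n : ℝ) ^ 2 - 1)) / 12) (uIcc 0 t) := by
    intro s hs
    rw [uIcc_of_le ht] at hs
    simp only [psiA, phiA, Xspace.psi_eq (hX s hs), mul_pow, ← Finset.mul_sum]
    field_simp
    ring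
  rw [intervalIntegral.integral_congr hpt,
    intervalIntegral.integral_add hphi intervalIntegrable_const,
    intervalIntegral.integral_const_mul, intervalIntegral.integral_const, smul_eq_mul]
  ring

/-- Identities and bounds for the radial interaction functional:
(i) the explicit identity for `Φ^{κ,a}_t`;
(ii) `Φ^{0,a}_t(θ) ≤ G_a(θ_0)`;
(iii) `Φ^{κ,a}_t = Φ^{0,a}_t + (κ/2)∫₀ᵗ ψ_a(θ_s) ds`, which is monotone in `κ` and
decreases to `Φ^{0,a}_t(θ)` as `κ ↓ 0`. -/
theorem Phi_identities
    (n : ℕ) (hn : 1 ≤ n) (a κ t : ℝ) (ha : 0 < a) (hκ : 0 ≤ κ) (ht : 0 < t)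
    (θ : ℝ → Fin n → ℝ)
    (hcont : ContinuousOn θ (Icc 0 t))
    (hX : ∀ s ∈ Icc (0 : ℝ) t, θ s ∈ Xspace n) :
    PhiK κ a t θ =
        a * Real.log (Fprod (θ t) / Fprod (θ 0)) +
          a * κ * ((n : ℝ) * ((n : ℝ) ^ 2 - 1)) * t / 24 +
          2 * (κ - a) / a * ∫ s in (0 : ℝ)..t, ∑ j, phiA a (θ s) j ^ 2 ∧
    PhiK 0 a t θ ≤ Ga a (θ 0) ∧
    PhiK κ a t θ = PhiK 0 a t θ + κ / 2 * ∫ s in (0 : ℝ)..t, psiA a (θ s) ∧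
    (∀ κ₁ κ₂ : ℝ, 0 ≤ κ₁ → κ₁ ≤ κ₂ → PhiK κ₁ a t θ ≤ PhiK κ₂ a t θ) ∧
    Tendsto (fun κ' => PhiK κ' a t θ) (𝓝[>] (0 : ℝ)) (𝓝 (PhiK 0 a t θ)) := by
  have hPhi := fun κ' => PhiK_eq_of_continuousOn κ' a ht.le hcont hX
  have hpsi : 0 ≤ ∫ s in (0 : ℝ)..t, psiA a (θ s) :=
    intervalIntegral.integral_nonneg ht.le fun s _ => psiA_nonneg ha.le _
  have hphi : 0 ≤ ∫ s in (0 : ℝ)..t, ∑ j, phiA a (θ s) j ^ 2 :=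
    intervalIntegral.integral_nonneg ht.le fun s _ => Finset.sum_nonneg fun _ _ => sq_nonneg _
  refine ⟨?_, ?_, ?_, fun κ₁ κ₂ _ hle => ?_, ?_⟩
  · rw [hPhi, integral_psiA_eq ha.ne' ht.le hcont hX,
      Real.log_div (Xspace.Fprod_ne_zero (hX t (right_mem_Icc.mpr ht.le)))
        (Xspace.Fprod_ne_zero (hX 0 (left_mem_Icc.mpr ht.le))), Ga, Ga]
    field_simp
    ring
  · rw [hPhi]
    linarith [Ga_nonneg ha.le (θ t)]
  · rw [hPhi, hPhi]
    ring
  · rw [hPhi, hPhi]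
    gcongr
  · simp only [hPhi]
    exact (Continuous.tendsto (by fun_prop) 0).mono_left nhdsWithin_le_nhds

end
end

section
/- Derivative estimate for the finite-energy radial Loewner flow (n = 1). Fix T > 0, a weight λ : [0,T] → (0,∞) with L := sup_{s∈[0,T]} 1/λ_s < ∞, and an absolutely continuous θ : [0,T] → ℝ with E_T(θ) < ∞. Fix t ∈ [0,T] and y > 0, and set ℓ_s := λ_{t−s} and ϱ_s := θ_t − θ_{t−s} for s ∈ [0,t]. Suppose X, Y, u : [0,t] → ℝ are absolutely continuous with X_0 = 0, Y_0 = y, u_0 = 0, Y_s > 0 for all s, satisfying almost everywhere the (backward radial Loewner) system X'_s = ϱ'_s − ℓ_s·sin(X_s)/(cosh(Y_s) − cos(X_s)), Y'_s = ℓ_s·sinh(Y_s)/(cosh(Y_s) − cos(X_s)), u'_s = ℓ_s·(1 − cos(X_s)·cosh(Y_s))/(cosh(Y_s) − cos(X_s))². (Here X_s + iY_s tracks the backward flow started at θ_t + iy and u_t = log|f_t'(θ_t + iy)| for the inverse Loewner map f_t.) Then u_t ≤ (1/4)·∫₀ᵗ (dθ_s/ds)²/λ_s ds ≤ (1/2)·L·E_T(θ).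 -/
open MeasureTheory Filter Set
open scoped Real Topology ENNReal Classical

noncomputable section

/-- Absolute continuity of a scalar function on `[0,T]`: it is the integral of a
(locally) integrable function. -/
def AbsCont1 (T : ℝ) (f : ℝ → ℝ) : Prop :=
  ∃ v : ℝ → ℝ, IntegrableOn v (Icc 0 T) ∧
    ∀ t ∈ Icc (0 : ℝ) T, f t = f 0 + ∫ s in (0 : ℝ)..t, v s

/-- Dirichlet energy of a scalar function on `[0,T]`. -/
def dEnergy1 (T : ℝ) (f : ℝ → ℝ) : ℝ≥0∞ :=
  if AbsCont1 T f then
    ENNReal.ofReal (1 / 2) * ∫⁻ s in Ioc (0 : ℝ) T, ENNReal.ofReal (deriv f s ^ 2)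
  else ⊤

/-- A function that is the integral of an integrable function is absolutely continuous in the
`ε`-`δ` sense. -/
theorem AbsCont1.absolutelyContinuousOnInterval {T : ℝ} {f : ℝ → ℝ} (hT : 0 ≤ T)
    (hf : AbsCont1 T f) : AbsolutelyContinuousOnInterval f 0 T := by
  obtain ⟨v, hv, hfv⟩ := hf
  have hvi : IntervalIntegrable v volume 0 T :=
    (intervalIntegrable_iff_integrableOn_Icc_of_le hT).2 hv
  have hac := hvi.absolutelyContinuousOnInterval_intervalIntegral (c := 0) (by simp)
  rw [absolutelyContinuousOnInterval_iff] at hac ⊢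
  intro ε hε
  obtain ⟨δ, hδ, h⟩ := hac ε hε
  refine ⟨δ, hδ, fun E hE hlen => ?_⟩
  refine lt_of_eq_of_lt (Finset.sum_congr rfl fun i hi => ?_) (h E hE hlen)
  have hmem := hE.1 i hi
  rw [uIcc_of_le hT] at hmem
  rw [hfv _ hmem.1, hfv _ hmem.2, dist_add_left]

/-- Post-composing an absolutely continuous function with a function that is Lipschitz on its
range gives an absolutely continuous function. -/
theorem LipschitzOnWith.comp_absolutelyContinuousOnInterval {f g : ℝ → ℝ} {a b : ℝ} {K : NNReal}
    (hg : LipschitzOnWith K g (f '' uIcc a b)) (hf : AbsolutelyContinuousOnInterval f a b) :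
    AbsolutelyContinuousOnInterval (fun x => g (f x)) a b := by
  rw [absolutelyContinuousOnInterval_iff] at hf ⊢
  intro ε hε
  obtain ⟨δ, hδ, h⟩ := hf (ε / (K + 1)) (by positivity)
  refine ⟨δ, hδ, fun E hE hlen => ?_⟩
  have hsum := h E hE hlen
  calc
    _ ≤ ∑ i ∈ Finset.range E.1, K * dist (f (E.2 i).1) (f (E.2 i).2) :=
      Finset.sum_le_sum fun i hi => hg.dist_le_mul _ (mem_image_of_mem f (hE.1 i hi).1) _
        (mem_image_of_mem f (hE.1 i hi).2)
    _ = K * ∑ i ∈ Finset.range E.1, dist (f (E.2 i).1) (f (E.2 i).2) := (Finset.mul_sum _ _ _).symm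
    _ ≤ K * (ε / (K + 1)) := by gcongr
    _ < (K + 1) * (ε / (K + 1)) := by gcongr; linarith
    _ = ε := by field

/-- Post-composing an absolutely continuous function with a function that is `C^1` around its
range gives an absolutely continuous function. -/
theorem AbsolutelyContinuousOnInterval.contDiffAt_comp {f g : ℝ → ℝ} {a b : ℝ}
    (hf : AbsolutelyContinuousOnInterval f a b)
    (hg : ∀ x ∈ uIcc a b, ContDiffAt ℝ 1 g (f x)) :
    AbsolutelyContinuousOnInterval (fun x => g (f x)) a b := by
  have hconn : IsPreconnected (f '' uIcc a b) := isPreconnected_uIcc.image f hf.continuousOn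
  have hg' : ContDiffOn ℝ 1 g (f '' uIcc a b) := by
    rintro _ ⟨x, hx, rfl⟩
    exact (hg x hx).contDiffWithinAt
  obtain ⟨K, hK⟩ := hg'.exists_lipschitzOnWith one_ne_zero hconn.ordConnected.convex
    (isCompact_uIcc.image_of_continuousOn hf.continuousOn)
  exact hK.comp_absolutelyContinuousOnInterval hf

/-- Comparison principle for absolutely continuous functions. -/
theorem AbsolutelyContinuousOnInterval.sub_le_integral {f g : ℝ → ℝ} {a b : ℝ} (hab : a ≤ b)
    (hf : AbsolutelyContinuousOnInterval f a b) (hg : IntervalIntegrable g volume a b)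
    (hfg : ∀ᵐ x ∂(volume.restrict (Icc a b)), deriv f x ≤ g x) :
    f b - f a ≤ ∫ x in a..b, g x := by
  rw [← hf.integral_deriv_eq_sub]
  exact intervalIntegral.integral_mono_ae_restrict hab hf.intervalIntegrable_deriv hg hfg

theorem AbsolutelyContinuousOnInterval.ae_restrict_differentiableAt {f : ℝ → ℝ} {a b : ℝ}
    (hab : a ≤ b) (hf : AbsolutelyContinuousOnInterval f a b) :
    ∀ᵐ x ∂(volume.restrict (Icc a b)), DifferentiableAt ℝ f x := by
  rw [ae_restrict_iff' measurableSet_Icc, ← uIcc_of_le hab]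
  exact hf.ae_differentiableAt

theorem cosh_sub_cos_pos {y : ℝ} (hy : 0 < y) (x : ℝ) : 0 < Real.cosh y - Real.cos x := by
  linarith [Real.one_lt_cosh.2 hy.ne', Real.cos_le_one x]

/-- The function `sinh / (cosh - 1)` is decreasing on the positive half-line. -/
theorem sinh_mul_cosh_sub_one_le {a b : ℝ} (ha : 0 ≤ a) (hab : a ≤ b) :
    Real.sinh b * (Real.cosh a - 1) ≤ Real.sinh a * (Real.cosh b - 1) := by
  obtain ⟨c, rfl⟩ := exists_add_of_le hab
  have hc : 0 ≤ c := by linarith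
  have hsa := Real.sinh_nonneg_iff.2 ha
  have hsc := Real.sinh_nonneg_iff.2 hc
  rw [Real.sinh_add, Real.cosh_add]
  nlinarith [mul_nonneg hsa (sub_nonneg.2 (Real.one_le_cosh c)),
    mul_nonneg hsc (sub_nonneg.2 (Real.one_le_cosh a)), Real.cosh_sq a]

/-- Along the backward radial Loewner flow, `u - log (sinh Y) + log (cosh Y - cos X)` grows at
most at the rate `p ^ 2 / (4 * ℓ)`, where `p` is the speed of the driver and `ℓ` the weight. -/
theorem radial_loewner_rate_le {ℓ x y p : ℝ} (hℓ : 0 < ℓ) (hy : 0 < y) :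
    ℓ * (1 - Real.cos x * Real.cosh y) / (Real.cosh y - Real.cos x) ^ 2
      - Real.cosh y * (ℓ * Real.sinh y / (Real.cosh y - Real.cos x)) / Real.sinh y
      + (Real.sinh y * (ℓ * Real.sinh y / (Real.cosh y - Real.cos x))
          - -Real.sin x * (p - ℓ * Real.sin x / (Real.cosh y - Real.cos x)))
        / (Real.cosh y - Real.cos x) ≤ 1 / 4 * (p ^ 2 / ℓ) := by
  have hD := cosh_sub_cos_pos hy x
  have hS := Real.sinh_pos_iff.2 hy
  have hC := Real.cosh_sq y
  have hc := Real.sin_sq_add_cos_sq x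
  generalize Real.sin x = s at *
  generalize Real.cos x = c at *
  generalize Real.cosh y = C at *
  generalize Real.sinh y = S at *
  have hkey : ℓ * (1 - c * C) / (C - c) ^ 2 - C * (ℓ * S / (C - c)) / S
      + (S * (ℓ * S / (C - c)) - -s * (p - ℓ * s / (C - c))) / (C - c)
      = s / (C - c) * p - ℓ * (s / (C - c)) ^ 2 := by
    field_simp
    linear_combination (-ℓ) * hC
  rw [hkey]
  generalize s / (C - c) = w
  rw [← mul_div_assoc, le_div_iff₀ hℓ]
  nlinarith [sq_nonneg (p - 2 * ℓ * w)]

/-- A function of finite Dirichlet energy has a square-integrable derivative. -/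
theorem integrableOn_deriv_sq_of_dEnergy1_ne_top {T : ℝ} {f : ℝ → ℝ} (hf : AbsCont1 T f)
    (hE : dEnergy1 T f ≠ ⊤) : IntegrableOn (fun s => deriv f s ^ 2) (Ioc 0 T) := by
  rw [dEnergy1, if_pos hf] at hE
  refine ⟨((measurable_deriv f).pow_const 2).aestronglyMeasurable, ?_⟩
  rw [hasFiniteIntegral_iff_ofReal (ae_of_all _ fun s => sq_nonneg _)]
  refine lt_top_iff_ne_top.2 fun h => hE ?_
  rw [h, ENNReal.mul_top (by simp)]

theorem dEnergy1_toReal {T : ℝ} {f : ℝ → ℝ} (hf : AbsCont1 T f) :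
    (dEnergy1 T f).toReal = 1 / 2 * ∫ s in Ioc 0 T, deriv f s ^ 2 := by
  rw [dEnergy1, if_pos hf, ENNReal.toReal_mul, ENNReal.toReal_ofReal (by norm_num),
    integral_eq_lintegral_of_nonneg_ae (ae_of_all _ fun s => sq_nonneg _)
      ((measurable_deriv f).pow_const 2).aestronglyMeasurable]

/-- Derivative estimate for the weighted radial Loewner flow with a
finite-energy driver (`n = 1`): if `X + iY` solves the backward radial Loewner flow
started at `θ_t + iy` and `u_s = log |f_s'(θ_t + iy)|` solves the associated derivative
ODE, then `u_t ≤ (1/4)∫₀ᵗ (dθ_s/ds)²/λ_s ds ≤ (1/2) L E_T(θ)` whenever `L` bounds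
`1/λ` on `[0,T]`. -/
theorem radial_loewner_derivative_estimate
    (T : ℝ) (hT : 0 < T)
    (lam : ℝ → ℝ) (hmeas : Measurable lam)
    (hlam : ∀ s ∈ Icc (0 : ℝ) T, 0 < lam s)
    (L : ℝ) (hL : ∀ s ∈ Icc (0 : ℝ) T, 1 / lam s ≤ L)
    (θ : ℝ → ℝ) (hAC : AbsCont1 T θ) (hE : dEnergy1 T θ ≠ ⊤)
    (t : ℝ) (ht : t ∈ Icc (0 : ℝ) T) (y : ℝ) (hy : 0 < y)
    (X Y u : ℝ → ℝ)
    (hX0 : X 0 = 0) (hY0 : Y 0 = y) (hu0 : u 0 = 0)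
    (hYpos : ∀ s ∈ Icc (0 : ℝ) t, 0 < Y s)
    (hXac : AbsCont1 t X) (hYac : AbsCont1 t Y) (huac : AbsCont1 t u)
    (hXde : ∀ᵐ s ∂(volume.restrict (Icc (0 : ℝ) t)),
      deriv X s = deriv (fun r => θ t - θ (t - r)) s -
        lam (t - s) * Real.sin (X s) / (Real.cosh (Y s) - Real.cos (X s)))
    (hYde : ∀ᵐ s ∂(volume.restrict (Icc (0 : ℝ) t)),
      deriv Y s = lam (t - s) * Real.sinh (Y s) / (Real.cosh (Y s) - Real.cos (X s)))
    (hude : ∀ᵐ s ∂(volume.restrict (Icc (0 : ℝ) t)),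
      deriv u s = lam (t - s) * (1 - Real.cos (X s) * Real.cosh (Y s)) /
        (Real.cosh (Y s) - Real.cos (X s)) ^ 2) :
    u t ≤ (1 / 4) * ∫ s in (0 : ℝ)..t, deriv θ s ^ 2 / lam s ∧
    (1 / 4) * (∫ s in (0 : ℝ)..t, deriv θ s ^ 2 / lam s) ≤
      (1 / 2) * L * (dEnergy1 T θ).toReal := by
  have h0t : 0 ≤ t := ht.1
  have hsub : Ioc (0 : ℝ) t ⊆ Ioc 0 T := Ioc_subset_Ioc_right ht.2
  have hL0 : 0 ≤ L := (one_div_nonneg.2 (hlam 0 ⟨le_rfl, hT.le⟩).le).trans (hL 0 ⟨le_rfl, hT.le⟩)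
  have hsq := integrableOn_deriv_sq_of_dEnergy1_ne_top hAC hE
  have hbound : ∀ s ∈ Ioc (0 : ℝ) t, deriv θ s ^ 2 / lam s ≤ L * deriv θ s ^ 2 := by
    intro s hs
    have hle := hL s (Ioc_subset_Icc_self (hsub hs))
    calc deriv θ s ^ 2 / lam s = 1 / lam s * deriv θ s ^ 2 := by ring
      _ ≤ L * deriv θ s ^ 2 := by gcongr
  have hdom : IntegrableOn (fun s => L * deriv θ s ^ 2) (Ioc 0 t) :=
    (hsq.mono_set hsub).const_mul L
  have hint : IntegrableOn (fun s => deriv θ s ^ 2 / lam s) (Ioc 0 t) := by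
    refine hdom.mono'
      (((measurable_deriv θ).pow_const 2).div hmeas).aestronglyMeasurable ?_
    filter_upwards [ae_restrict_mem measurableSet_Ioc] with s hs
    rw [Real.norm_of_nonneg
      (div_nonneg (sq_nonneg _) (hlam s (Ioc_subset_Icc_self (hsub hs))).le)]
    exact hbound s hs
  refine ⟨?_, ?_⟩
  · have hX := hXac.absolutelyContinuousOnInterval h0t
    have hY := hYac.absolutelyContinuousOnInterval h0t
    have hu := huac.absolutelyContinuousOnInterval h0t
    have hlamt : ∀ s ∈ Icc (0 : ℝ) t, 0 < lam (t - s) := fun s hs =>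
      hlam _ ⟨sub_nonneg.2 hs.2, by linarith [hs.1, ht.2]⟩
    have hYt : y ≤ Y t := by
      have hmono := hY.fun_neg.sub_le_integral h0t (g := fun _ => 0) (by simp) (by
        filter_upwards [hYde, ae_restrict_mem measurableSet_Icc] with s hs hmem
        rw [deriv.fun_neg, hs, neg_nonpos]
        exact div_nonneg (mul_nonneg (hlamt s hmem).le
          (Real.sinh_pos_iff.2 (hYpos s hmem)).le) (cosh_sub_cos_pos (hYpos s hmem) _).le)
      simp only [intervalIntegral.integral_zero, hY0] at hmono
      linarith
    have hD : AbsolutelyContinuousOnInterval (fun s => Real.cosh (Y s) - Real.cos (X s)) 0 t :=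
      (hY.contDiffAt_comp fun _ _ => Real.contDiff_cosh.contDiffAt).fun_sub
        (hX.contDiffAt_comp fun _ _ => Real.contDiff_cos.contDiffAt)
    have hlogD := hD.contDiffAt_comp (g := Real.log) fun s hs =>
      Real.contDiffAt_log.2 (cosh_sub_cos_pos (hYpos s (by rwa [uIcc_of_le h0t] at hs)) _).ne'
    have hlogS := (hY.contDiffAt_comp fun _ _ => Real.contDiff_sinh.contDiffAt).contDiffAt_comp
      (g := Real.log) fun s hs => Real.contDiffAt_log.2
        (Real.sinh_pos_iff.2 (hYpos s (by rwa [uIcc_of_le h0t] at hs))).ne'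
    have hG := (hu.fun_sub hlogS).fun_add hlogD
    have hint' : IntervalIntegrable (fun s => deriv θ s ^ 2 / lam s) volume 0 t :=
      (intervalIntegrable_iff_integrableOn_Ioc_of_le h0t).2 hint
    have hrev := (hint'.comp_sub_left t).symm
    rw [sub_self, sub_zero] at hrev
    have hmain := hG.sub_le_integral h0t (hrev.const_mul (1 / 4)) (by
      filter_upwards [hXde, hYde, hude, ae_restrict_mem measurableSet_Icc,
        hX.ae_restrict_differentiableAt h0t, hY.ae_restrict_differentiableAt h0t,
        hu.ae_restrict_differentiableAt h0t] with s hXs hYs hus hmem hXd hYd hud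
      have hDs := (cosh_sub_cos_pos (hYpos s hmem) (X s)).ne'
      have hSs := (Real.sinh_pos_iff.2 (hYpos s hmem)).ne'
      have hder := (hud.hasDerivAt.fun_sub (hYd.hasDerivAt.sinh.log hSs)).fun_add
        ((hYd.hasDerivAt.cosh.fun_sub hXd.hasDerivAt.cos).log hDs)
      rw [deriv_const_sub, deriv_comp_const_sub, neg_neg] at hXs
      rw [hder.deriv, hXs, hYs, hus]
      exact radial_loewner_rate_le (hlamt s hmem) (hYpos s hmem))
    rw [intervalIntegral.integral_const_mul,
      intervalIntegral.integral_comp_sub_left (fun s => deriv θ s ^ 2 / lam s) t,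
      sub_self, sub_zero, hX0, hY0, hu0, Real.cos_zero] at hmain
    have hytpos : 0 < Y t := hy.trans_le hYt
    have hSy := Real.sinh_pos_iff.2 hy
    have hDt := cosh_sub_cos_pos hytpos (X t)
    have hSt := Real.sinh_pos_iff.2 hytpos
    have hDy : 0 < Real.cosh y - 1 := sub_pos.2 (Real.one_lt_cosh.2 hy.ne')
    have hlog : Real.log (Real.sinh (Y t)) + Real.log (Real.cosh y - 1)
        ≤ Real.log (Real.sinh y) + Real.log (Real.cosh (Y t) - Real.cos (X t)) := by
      rw [← Real.log_mul hSt.ne' hDy.ne', ← Real.log_mul hSy.ne' hDt.ne']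
      refine Real.log_le_log (mul_pos hSt hDy) ((sinh_mul_cosh_sub_one_le hy.le hYt).trans ?_)
      gcongr
      exact Real.cos_le_one _
    linarith
  · rw [dEnergy1_toReal hAC, intervalIntegral.integral_of_le h0t]
    have hle : ∫ s in Ioc 0 t, deriv θ s ^ 2 / lam s ≤ ∫ s in Ioc 0 t, L * deriv θ s ^ 2 :=
      setIntegral_mono_on hint hdom measurableSet_Ioc hbound
    have hle' : ∫ s in Ioc 0 t, deriv θ s ^ 2 ≤ ∫ s in Ioc 0 T, deriv θ s ^ 2 :=
      setIntegral_mono_set hsq (ae_of_all _ fun s => sq_nonneg _) hsub.eventuallyLE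
    rw [integral_const_mul] at hle
    linarith [mul_le_mul_of_nonneg_left hle' hL0]

end
end
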